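/- arXiv:2102.02921 — 2 statements merged into one kernel-verified Lean document; each statement's English description precedes it below -/
import Mathlib

section
/- Assume f is L_f-smooth and μ-strongly convex with μ > 0, Q = ℝⁿ, the inexact gradient satisfies ‖g̃(x) − ∇f(x)‖₂ ≤ α‖∇f(x)‖₂ for all x with α ≤ (1/7)(μ₂/L) where L = 2L_f and μ₂ = μ/2, and ‖x_start − x*‖₂ ≤ R. Then for all k ≥ 1 the sequence {y_k} generated by STM2 satisfies f(y_k) − f(x*) ≤ (5 L R² / 4 + (15/196) √(2L/μ) (f(y₀) − f(x*))) · exp(−(k/4)√(μ/(2L))). -/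
open scoped RealInnerProductSpace

section Smooth

variable {E : Type*} [NormedAddCommGroup E] [InnerProductSpace ℝ E] [CompleteSpace E]

/-- The descent lemma: a function with `K`-Lipschitz gradient lies below its quadratic model. -/
theorem le_quadratic_of_lipschitz_gradient {f : E → ℝ} {f' : E → E} {K : ℝ}
    (hgrad : ∀ v, HasGradientAt f (f' v) v) (hsmooth : ∀ v w, ‖f' v - f' w‖ ≤ K * ‖v - w‖)
    (v w : E) : f w ≤ f v + ⟪f' v, w - v⟫ + K / 2 * ‖w - v‖ ^ 2 := by
  set d := w - v with hd
  let φ : ℝ → ℝ := fun t => f (v + t • d) - t * ⟪f' v, d⟫ - K / 2 * t ^ 2 * ‖d‖ ^ 2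
  have hline : ∀ t : ℝ, HasDerivAt (fun t : ℝ => v + t • d) d t := fun t => by
    simpa using ((hasDerivAt_id t).smul_const d).const_add v
  have hφ : ∀ t : ℝ,
      HasDerivAt φ (⟪f' (v + t • d), d⟫ - ⟪f' v, d⟫ - K * t * ‖d‖ ^ 2) t := fun t => by
    have h1 : HasDerivAt (fun t : ℝ => f (v + t • d)) ⟪f' (v + t • d), d⟫ t := by
      have h := (hgrad (v + t • d)).hasFDerivAt.comp_hasDerivAt t (hline t)
      rwa [InnerProductSpace.toDual_apply_apply] at h
    have h2 : HasDerivAt (fun t : ℝ => t * ⟪f' v, d⟫) ⟪f' v, d⟫ t := by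
      simpa using (hasDerivAt_id t).mul_const ⟪f' v, d⟫
    have h3 : HasDerivAt (fun t : ℝ => K / 2 * t ^ 2 * ‖d‖ ^ 2) (K * t * ‖d‖ ^ 2) t := by
      refine (((hasDerivAt_pow 2 t).const_mul (K / 2)).mul_const (‖d‖ ^ 2)).congr_deriv ?_
      push_cast
      ring
    exact (h1.sub h2).sub h3
  have hanti : AntitoneOn φ (Set.Icc 0 1) := by
    refine antitoneOn_of_deriv_nonpos (convex_Icc 0 1)
      (fun t _ => (hφ t).continuousAt.continuousWithinAt)
      (fun t _ => (hφ t).differentiableAt.differentiableWithinAt) fun t ht => ?_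
    rw [interior_Icc] at ht
    rw [(hφ t).deriv, ← inner_sub_left]
    have h1 := real_inner_le_norm (f' (v + t • d) - f' v) d
    have h2 := hsmooth (v + t • d) v
    rw [add_sub_cancel_left, norm_smul, Real.norm_of_nonneg ht.1.le] at h2
    nlinarith [mul_le_mul_of_nonneg_right h2 (norm_nonneg d)]
  have h := hanti (Set.left_mem_Icc.2 zero_le_one) (Set.right_mem_Icc.2 zero_le_one) zero_le_one
  have hw : v + d = w := by rw [hd]; abel
  simp only [φ, one_smul, zero_smul, add_zero, hw] at h
  linarith

theorem HasGradientAt.eq_zero_of_forall_le {f : E → ℝ} {g z : E} (h : HasGradientAt f g z)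
    (hz : ∀ v, f z ≤ f v) : g = 0 := by
  have h0 := IsLocalMin.hasFDerivAt_eq_zero (Filter.Eventually.of_forall hz) h.hasFDerivAt
  simpa using h0

end Smooth

section Step

variable {E : Type*} [NormedAddCommGroup E] [InnerProductSpace ℝ E]

/-- One step of the similar triangles method does not increase the potential
`A (f x - f z) + (1 + m A) / 2 * ‖u - z‖ ^ 2`, provided the gradient error at `y` is at most
`m / 14 * ‖y - z‖`. -/
theorem similarTriangles_potential_le {f : E → ℝ} {g gt x₀ u₀ y u x z : E} {K m A₀ α : ℝ}
    (hm : 0 < m) (hA₀ : 0 < A₀) (hα : 0 < α)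
    (hαeq : (1 + m * A₀) * (A₀ + α) = 2 * K * α ^ 2)
    (hdesc : f x ≤ f y + ⟪g, x - y⟫ + K / 2 * ‖x - y‖ ^ 2)
    (hconv : f y + ⟪g, x₀ - y⟫ ≤ f x₀)
    (hsc : f y + ⟪g, z - y⟫ + m * ‖y - z‖ ^ 2 ≤ f z)
    (herr : ‖gt - g‖ ≤ m / 14 * ‖y - z‖)
    (hy : y = (A₀ + α)⁻¹ • (A₀ • x₀ + α • u₀))
    (hu : u = (1 + m * (A₀ + α))⁻¹ • ((1 + m * A₀) • u₀ + (m * α) • y - α • gt))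
    (hx : x = (A₀ + α)⁻¹ • (A₀ • x₀ + α • u)) :
    (A₀ + α) * (f x - f z) + (1 + m * (A₀ + α)) / 2 * ‖u - z‖ ^ 2 ≤
      A₀ * (f x₀ - f z) + (1 + m * A₀) / 2 * ‖u₀ - z‖ ^ 2 := by
  have hA : 0 < A₀ + α := by positivity
  have hB : 0 < 1 + m * (A₀ + α) := by positivity
  have hy' : A₀ • (x₀ - y) = -(α • (u₀ - y)) := by
    have h : (A₀ + α) • y = A₀ • x₀ + α • u₀ := by rw [hy, smul_inv_smul₀ hA.ne']
    calc A₀ • (x₀ - y) = A₀ • x₀ + α • u₀ - α • u₀ - A₀ • y := by module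
      _ = -(α • (u₀ - y)) := by rw [← h]; module
  have hu' : α • gt = (1 + m * A₀) • (u₀ - y) - (1 + m * (A₀ + α)) • (u - y) := by
    have h : (1 + m * (A₀ + α)) • u = (1 + m * A₀) • u₀ + (m * α) • y - α • gt := by
      rw [hu, smul_inv_smul₀ hB.ne']
    rw [smul_sub _ u, h]
    module
  have hx' : (A₀ + α) • (x - y) = α • (u - y - (u₀ - y)) := by
    have h : (A₀ + α) • x = A₀ • x₀ + α • u := by rw [hx, smul_inv_smul₀ hA.ne']
    have h' : (A₀ + α) • y = A₀ • x₀ + α • u₀ := by rw [hy, smul_inv_smul₀ hA.ne']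
    rw [smul_sub, h, h']
    module
  have euz : u - z = (u - y) - (z - y) := by abel
  have eu0z : u₀ - z = (u₀ - y) - (z - y) := by abel
  have hs : ‖y - z‖ = ‖z - y‖ := norm_sub_rev y z
  rw [euz, eu0z]
  rw [hs] at hsc herr
  generalize hp : x₀ - y = p at *
  generalize hv : u₀ - y = v at *
  generalize hw : u - y = w at *
  generalize hz : z - y = s at *
  generalize hr : x - y = r at *
  have hnorm : (A₀ + α) * (K / 2 * ‖r‖ ^ 2) = (1 + m * A₀) / 4 * ‖w - v‖ ^ 2 := by
    have h : (A₀ + α) ^ 2 * ‖r‖ ^ 2 = α ^ 2 * ‖w - v‖ ^ 2 := by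
      have := congrArg (fun t => ‖t‖ ^ 2) hx'
      simpa [norm_smul, mul_pow, abs_of_pos hA, abs_of_pos hα] using this
    have h2 : (A₀ + α) * ((A₀ + α) * (K / 2 * ‖r‖ ^ 2)) =
        (A₀ + α) * ((1 + m * A₀) / 4 * ‖w - v‖ ^ 2) := by
      linear_combination K / 2 * h - ‖w - v‖ ^ 2 / 4 * hαeq
    exact mul_left_cancel₀ hA.ne' h2
  have hgr : (A₀ + α) * ⟪g, r⟫ = α * ⟪g, w⟫ - α * ⟪g, v⟫ := by
    have := congrArg (fun t => ⟪g, t⟫) hx'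
    simpa [inner_smul_right, inner_sub_right, mul_sub] using this
  have hgp : A₀ * ⟪g, p⟫ = -(α * ⟪g, v⟫) := by
    have := congrArg (fun t => ⟪g, t⟫) hy'
    simpa [inner_smul_right] using this
  have hgt : α * ⟪gt, w - s⟫ =
      (1 + m * A₀) * ⟪v, w - s⟫ - (1 + m * (A₀ + α)) * ⟪w, w - s⟫ := by
    have := congrArg (fun t => ⟪t, w - s⟫) hu'
    simpa only [inner_smul_left, inner_sub_left, RCLike.conj_to_real] using this
  have herr' : -⟪gt - g, w - s⟫ ≤ m / 2 * ‖s‖ ^ 2 + m / 2 * ‖w‖ ^ 2 := by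
    have h1 := (abs_le.1 (abs_real_inner_le_norm (gt - g) (w - s))).1
    have h2 : ‖gt - g‖ * ‖w - s‖ ≤ m / 14 * ‖s‖ * (‖w‖ + ‖s‖) := by
      gcongr
      exact norm_sub_le w s
    nlinarith [mul_nonneg hm.le (sq_nonneg (‖s‖ - ‖w‖)), mul_nonneg hm.le (sq_nonneg ‖s‖),
      mul_nonneg hm.le (sq_nonneg ‖w‖)]
  have hvw : 0 ≤ (1 + m * A₀) * ‖w - v‖ ^ 2 := by positivity
  have hms : 0 ≤ α * m * ‖s‖ ^ 2 := by positivity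
  have k1 := mul_le_mul_of_nonneg_left hdesc hA.le
  have k2 := mul_le_mul_of_nonneg_left hconv hA₀.le
  have k3 := mul_le_mul_of_nonneg_left hsc hα.le
  have k4 := mul_le_mul_of_nonneg_left herr' hα.le
  simp only [norm_sub_sq_real, inner_sub_left, inner_sub_right, real_inner_self_eq_norm_sq]
    at hgt k4 hnorm hvw ⊢
  rw [real_inner_comm v w] at *
  nlinarith

end Step

/-- Geometric growth of the step-size sums of the similar triangles method. -/
theorem similarTriangles_growth {L m q : ℝ} {α A : ℕ → ℝ} (hL : 0 < L) (hm : 0 < m)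
    (hq : 0 ≤ q) (hqm : L * q ^ 2 = m) (hA0 : A 0 = 1 / L) (hαpos : ∀ k, 0 < α (k + 1))
    (hαeq : ∀ k, (1 + m * A k) * (A k + α (k + 1)) = L * α (k + 1) ^ 2)
    (hA : ∀ k, A (k + 1) = A k + α (k + 1)) (k : ℕ) :
    0 < A k ∧ 2 * (1 + q) ^ k ≤ L * A (k + 1) := by
  have hpos : ∀ k, 0 < A k := fun k => by
    induction k with
    | zero => rw [hA0]; positivity
    | succ k ih => rw [hA]; linarith [hαpos k]
  refine ⟨hpos k, ?_⟩
  induction k with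
  | zero =>
    have h1 : L * A 0 = 1 := by rw [hA0]; field_simp
    have h2 : 0 < L * α 1 := mul_pos hL (hαpos 0)
    have h3 := hαeq 0
    have h4 : 1 + L * α 1 ≤ (L * α 1) ^ 2 := by
      have h5 : 0 ≤ m * A 0 * (A 0 + α 1) :=
        (mul_pos (mul_pos hm (hpos 0)) (add_pos (hpos 0) (hαpos 0))).le
      have h6 : A 0 + α 1 ≤ L * α 1 ^ 2 := by
        simp only [zero_add] at h3
        linarith
      have := mul_le_mul_of_nonneg_left h6 hL.le
      linarith
    rw [hA, mul_add, h1]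
    simp only [zero_add, pow_zero]
    nlinarith
  | succ k ih =>
    have hstep : q * A (k + 1) ≤ α (k + 1 + 1) := by
      have h1 := hαeq (k + 1)
      have hp := hpos (k + 1)
      have ha := hαpos (k + 1)
      have h2 : L * (q * A (k + 1)) ^ 2 ≤ L * α (k + 1 + 1) ^ 2 := by
        rw [← h1, mul_pow, ← mul_assoc, hqm]
        nlinarith [mul_pos hm (mul_pos hp ha)]
      exact le_of_sq_le_sq (le_of_mul_le_mul_left h2 hL) ha.le
    rw [hA (k + 1), pow_succ]
    nlinarith [mul_le_mul_of_nonneg_left hstep hL.le,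
      mul_le_mul_of_nonneg_right ih (by linarith : 0 ≤ 1 + q)]

theorem Real.exp_half_le_one_add {q : ℝ} (hq0 : 0 ≤ q) (hq1 : q ≤ 1) :
    Real.exp (q / 2) ≤ 1 + q := by
  have h := Real.exp_bound_div_one_sub_of_interval (x := q / 2) (by linarith) (by linarith)
  refine h.trans ?_
  rw [div_le_iff₀ (by linarith)]
  nlinarith

theorem similarTriangles_inv_add_inv_le {L m q : ℝ} {α A : ℕ → ℝ} (hL : 0 < L) (hm : 0 < m)
    (hq0 : 0 ≤ q) (hq1 : q ≤ 1 / 2) (hqm : L * q ^ 2 = m) (hA0 : A 0 = 1 / L)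
    (hαpos : ∀ k, 0 < α (k + 1))
    (hαeq : ∀ k, (1 + m * A k) * (A k + α (k + 1)) = L * α (k + 1) ^ 2)
    (hA : ∀ k, A (k + 1) = A k + α (k + 1)) (j : ℕ) :
    1 / A (j + 1) + 1 / (2 * α (j + 1)) ≤
      5 / 4 * L * (Real.exp (((j + 1 : ℕ) : ℝ) / 4 * q))⁻¹ := by
  have hgrowth := similarTriangles_growth hL hm hq0 hqm hA0 hαpos hαeq hA
  have hAj := (hgrowth j).1
  have hαj := hαpos j
  have hAj1 := (hgrowth (j + 1)).1
  have hαeqj := hαeq j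
  rw [← hA] at hαeqj
  set z := Real.exp (((j + 1 : ℕ) : ℝ) / 4 * q) with hz
  have hz1 : 1 ≤ z := Real.one_le_exp (by positivity)
  have hz2 : z ^ 2 ≤ (1 + q) ^ (j + 1) := by
    have e : z ^ 2 = Real.exp (q / 2) ^ (j + 1) := by
      rw [hz, ← Real.exp_nat_mul, ← Real.exp_nat_mul]
      congr 1
      push_cast
      ring
    rw [e]
    gcongr
    exact Real.exp_half_le_one_add hq0 (by linarith)
  have hAz : 4 / 3 * z ^ 2 ≤ L * A (j + 1) := by
    have h := (hgrowth j).2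
    have hp : 0 < (1 + q) ^ j := by positivity
    have e : (1 + q) ^ (j + 1) = (1 + q) ^ j * (1 + q) := pow_succ _ _
    nlinarith
  have hαz : z ≤ L * α (j + 1) := by
    refine le_of_sq_le_sq ?_ (by positivity)
    have h : 0 ≤ m * A j * A (j + 1) := by positivity
    have h' := mul_le_mul_of_nonneg_left (by linarith :
      A (j + 1) ≤ L * α (j + 1) ^ 2) hL.le
    nlinarith
  have h1 : 1 / A (j + 1) ≤ 3 / 4 * L * z⁻¹ := by
    rw [← div_eq_mul_inv, div_le_div_iff₀ hAj1 (by positivity)]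
    nlinarith
  have h2 : 1 / (2 * α (j + 1)) ≤ 1 / 2 * L * z⁻¹ := by
    rw [← div_eq_mul_inv, div_le_div_iff₀ (by positivity) (by positivity)]
    linarith
  linarith

/-- Theorem 5.1: linear convergence of STM2 under relative noise
`‖g̃(x) − ∇f(x)‖ ≤ a ‖∇f(x)‖` with `a ≤ (1/7)(μ₂/L)`, `L = 2 L_f`, `μ₂ = μ/2`. -/
theorem stmt_16 {n : ℕ}
    (f : EuclideanSpace ℝ (Fin n) → ℝ)
    (f' gt : EuclideanSpace ℝ (Fin n) → EuclideanSpace ℝ (Fin n))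
    (Lf μ a R : ℝ) (hLf : 0 < Lf) (hμ : 0 < μ)
    (ha0 : 0 ≤ a) (ha1 : a ≤ 1)
    (haB : a ≤ 1 / 7 * (μ / 2 / (2 * Lf)))
    (hgrad : ∀ v, HasGradientAt f (f' v) v)
    (hsmooth : ∀ v w, ‖f' v - f' w‖ ≤ Lf * ‖v - w‖)
    (hsc : ∀ v w, f v + ⟪f' v, w - v⟫ + μ / 2 * ‖v - w‖ ^ 2 ≤ f w)
    (hrel : ∀ v, ‖gt v - f' v‖ ≤ a * ‖f' v‖)
    (xstar : EuclideanSpace ℝ (Fin n)) (hxstar : ∀ v, f xstar ≤ f v)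
    (xstart : EuclideanSpace ℝ (Fin n)) (hR : ‖xstart - xstar‖ ≤ R)
    (α A : ℕ → ℝ) (y u x : ℕ → EuclideanSpace ℝ (Fin n))
    (hy0 : y 0 = xstart) (hu0 : u 0 = xstart) (hx0 : x 0 = xstart)
    (hα0 : α 0 = 1 / (2 * Lf)) (hA0 : A 0 = 1 / (2 * Lf))
    (hαpos : ∀ k, 0 < α (k + 1))
    (hαeq : ∀ k, (1 + μ / 2 * A k) * (A k + α (k + 1)) = 2 * Lf * α (k + 1) ^ 2)
    (hA : ∀ k, A (k + 1) = A k + α (k + 1))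
    (hy : ∀ k, y (k + 1) = (A (k + 1))⁻¹ • (A k • x k + α (k + 1) • u k))
    (hu : ∀ k, u (k + 1) = (1 + μ / 2 * A (k + 1))⁻¹ •
      ((1 + μ / 2 * A k) • u k + (μ / 2 * α (k + 1)) • y (k + 1) -
        α (k + 1) • gt (y (k + 1))))
    (hx : ∀ k, x (k + 1) = (A (k + 1))⁻¹ • (A k • x k + α (k + 1) • u (k + 1))) :
    ∀ k : ℕ, 1 ≤ k → f (y k) - f xstar ≤
      (5 * (2 * Lf) * R ^ 2 / 4 +
        15 / 196 * Real.sqrt (2 * (2 * Lf) / μ) * (f (y 0) - f xstar)) *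
      Real.exp (-((k : ℝ) / 4) * Real.sqrt (μ / (2 * (2 * Lf)))) := by
  have hg0 : f' xstar = 0 := (hgrad xstar).eq_zero_of_forall_le hxstar
  have hquad : ∀ v, f v - f xstar ≤ Lf / 2 * ‖v - xstar‖ ^ 2 := fun v => by
    have h := le_quadratic_of_lipschitz_gradient hgrad hsmooth xstar v
    rw [hg0, inner_zero_left] at h
    linarith
  have hconv : ∀ v w, f v + ⟪f' v, w - v⟫ ≤ f w := fun v w => by
    have h : 0 ≤ μ / 2 * ‖v - w‖ ^ 2 := by positivity
    linarith [hsc v w]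
  intro k hk
  obtain ⟨j, rfl⟩ : ∃ j, k = j + 1 := ⟨k - 1, by omega⟩
  have hinit : 0 ≤ f (y 0) - f xstar := sub_nonneg.2 (hxstar _)
  rcases eq_or_ne (y (j + 1)) xstar with heq | hne
  · rw [heq, sub_self]
    positivity
  have hμL : μ ≤ Lf := by
    have hpos : 0 < ‖y (j + 1) - xstar‖ ^ 2 := by
      have := norm_pos_iff.2 (sub_ne_zero.2 hne)
      positivity
    have h1 := hsc xstar (y (j + 1))
    rw [hg0, inner_zero_left, norm_sub_rev] at h1
    exact le_of_mul_le_mul_right (by linarith [hquad (y (j + 1))]) hpos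
  set q := Real.sqrt (μ / (2 * (2 * Lf))) with hqdef
  have hq0 : 0 ≤ q := Real.sqrt_nonneg _
  have hqsq : q ^ 2 = μ / (2 * (2 * Lf)) := Real.sq_sqrt (by positivity)
  have hqm : 2 * Lf * q ^ 2 = μ / 2 := by rw [hqsq]; field_simp
  have hq1 : q ≤ 1 / 2 := by
    refine le_of_sq_le_sq ?_ (by norm_num)
    rw [hqsq, div_le_iff₀ (by positivity)]
    linarith
  have hgrowth := similarTriangles_growth (by positivity : 0 < 2 * Lf) (half_pos hμ) hq0 hqm
    hA0 hαpos hαeq hA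
  have hnoise : a * Lf ≤ μ / 2 / 14 := by
    calc a * Lf ≤ 1 / 7 * (μ / 2 / (2 * Lf)) * Lf := by gcongr
      _ = μ / 2 / 14 := by field_simp; norm_num
  have herr : ∀ v, ‖gt v - f' v‖ ≤ μ / 2 / 14 * ‖v - xstar‖ := fun v => by
    have h := hsmooth v xstar
    rw [hg0, sub_zero] at h
    calc ‖gt v - f' v‖ ≤ a * (Lf * ‖v - xstar‖) :=
          (hrel v).trans (mul_le_mul_of_nonneg_left h ha0)
      _ = a * Lf * ‖v - xstar‖ := by ring
      _ ≤ μ / 2 / 14 * ‖v - xstar‖ := by gcongr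
  have hpot : ∀ i, A i * (f (x i) - f xstar) + (1 + μ / 2 * A i) / 2 * ‖u i - xstar‖ ^ 2 ≤
      7 / 8 * R ^ 2 := fun i => by
    induction i with
    | zero =>
      have hR2 : ‖xstart - xstar‖ ^ 2 ≤ R ^ 2 := by gcongr
      have hA0L : A 0 * Lf = 1 / 2 := by rw [hA0]; field_simp
      have hA0m : μ / 2 * A 0 ≤ 1 / 4 := by nlinarith [(hgrowth 0).1]
      have h := mul_le_mul_of_nonneg_left (hquad xstart) (hgrowth 0).1.le
      rw [hx0, hu0]
      nlinarith [mul_le_mul_of_nonneg_right hA0m (sq_nonneg ‖xstart - xstar‖)]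
    | succ i ih =>
      refine le_trans ?_ ih
      have hy' := hy i
      have hu' := hu i
      have hx' := hx i
      rw [hA] at hy' hu' hx' ⊢
      exact similarTriangles_potential_le (half_pos hμ) (hgrowth i).1 (hαpos i) (hαeq i)
        (le_quadratic_of_lipschitz_gradient hgrad hsmooth _ _) (hconv _ _) (hsc _ _) (herr _)
        hy' hu' hx'
  have hAj := (hgrowth j).1
  have hαj := hαpos j
  have hAj1 := (hgrowth (j + 1)).1
  have hαeqj := hαeq j
  rw [← hA] at hαeqj
  -- `f (y (j + 1))` is controlled by the potential, by convexity.
  have hF : f (y (j + 1)) - f xstar ≤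
      7 / 8 * R ^ 2 * (1 / A (j + 1) + 1 / (2 * α (j + 1))) := by
    have hzero : A j * ⟪f' (y (j + 1)), x j - y (j + 1)⟫ +
        α (j + 1) * ⟪f' (y (j + 1)), u j - y (j + 1)⟫ = 0 := by
      have h : A (j + 1) • y (j + 1) = A j • x j + α (j + 1) • u j := by
        rw [hy, smul_inv_smul₀ hAj1.ne']
      have h' : A j • (x j - y (j + 1)) + α (j + 1) • (u j - y (j + 1)) = 0 := by
        calc _ = A j • x j + α (j + 1) • u j - (A j + α (j + 1)) • y (j + 1) := by module
          _ = 0 := by rw [← h, hA, sub_self]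
      rw [← real_inner_smul_right, ← real_inner_smul_right, ← inner_add_right, h',
        inner_zero_right]
    have k1 := mul_le_mul_of_nonneg_left (hconv (y (j + 1)) (x j)) hAj.le
    have k2 := mul_le_mul_of_nonneg_left (hconv (y (j + 1)) (u j)) hαj.le
    have k3 := mul_le_mul_of_nonneg_left (hquad (u j)) hαj.le
    have k4 : A (j + 1) * (f (y (j + 1)) - f xstar) ≤
        A j * (f (x j) - f xstar) + α (j + 1) * (Lf / 2 * ‖u j - xstar‖ ^ 2) := by
      rw [hA]
      linarith
    have k5 : α (j + 1) * (Lf / 2 * ‖u j - xstar‖ ^ 2) =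
        A (j + 1) / (2 * α (j + 1)) * ((1 + μ / 2 * A j) / 2 * ‖u j - xstar‖ ^ 2) := by
      field_simp
      linear_combination (-2 * ‖u j - xstar‖ ^ 2) * hαeqj
    have hX : 0 ≤ A j * (f (x j) - f xstar) := mul_nonneg hAj.le (sub_nonneg.2 (hxstar _))
    have hU : 0 ≤ (1 + μ / 2 * A j) / 2 * ‖u j - xstar‖ ^ 2 := by positivity
    have hc : 0 ≤ A (j + 1) / (2 * α (j + 1)) := by positivity
    have k6 : A (j + 1) * (f (y (j + 1)) - f xstar) ≤
        A (j + 1) * (7 / 8 * R ^ 2 * (1 / A (j + 1) + 1 / (2 * α (j + 1)))) := by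
      have e : A (j + 1) * (7 / 8 * R ^ 2 * (1 / A (j + 1) + 1 / (2 * α (j + 1)))) =
          7 / 8 * R ^ 2 + A (j + 1) / (2 * α (j + 1)) * (7 / 8 * R ^ 2) := by field_simp
      rw [e]
      have hP := hpot j
      have hU' := mul_le_mul_of_nonneg_left (by linarith :
        (1 + μ / 2 * A j) / 2 * ‖u j - xstar‖ ^ 2 ≤ 7 / 8 * R ^ 2) hc
      linarith
    exact le_of_mul_le_mul_left k6 hAj1
  have hsum := similarTriangles_inv_add_inv_le (by positivity : 0 < 2 * Lf) (half_pos hμ) hq0 hq1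
    hqm hA0 hαpos hαeq hA j
  set z := Real.exp (((j + 1 : ℕ) : ℝ) / 4 * q) with hz
  have hz0 : 0 < z := Real.exp_pos _
  have hexp : Real.exp (-(((j + 1 : ℕ) : ℝ) / 4) * q) = z⁻¹ := by
    rw [hz, ← Real.exp_neg, neg_mul]
  rw [hexp]
  have hrest : 0 ≤ 15 / 196 * Real.sqrt (2 * (2 * Lf) / μ) * (f (y 0) - f xstar) := by positivity
  calc f (y (j + 1)) - f xstar ≤ 7 / 8 * R ^ 2 * (5 / 4 * (2 * Lf) * z⁻¹) :=
        hF.trans (by gcongr)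
    _ = 7 / 8 * (5 * (2 * Lf) * R ^ 2 / 4) * z⁻¹ := by ring
    _ ≤ _ := by
      gcongr
      have : 0 ≤ 5 * (2 * Lf) * R ^ 2 / 4 := by positivity
      linarith
end

section
/- In the composite setting with f = 𝓛 + r, for all k ≥ 0 the modified STM iterates satisfy A_k f(x_k) ≤ ψ_k(z_k) + δ₂ Σ_{j=0}^{k} A_j + δ₁ Σ_{j=1}^{k} α_j ‖x̃_j − z_{j−1}‖₂, where δ₁ = δ and δ₂ = δ²/(2L_f). -/
open scoped RealInnerProductSpace

section

variable {E : Type*} [NormedAddCommGroup E] [InnerProductSpace ℝ E]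

/-- Adding an affine function and the quadratic `m / 2 * ‖y - a‖ ^ 2` to a convex function gives an
`m`-strongly convex function. -/
lemma ConvexOn.strongConvexOn_model {s : Set E} {h : E → ℝ} (hh : ConvexOn ℝ s h)
    (m c : ℝ) (g a : E) :
    StrongConvexOn s m fun y ↦ c + ⟪g, y - a⟫ + m / 2 * ‖y - a‖ ^ 2 + h y := by
  rw [strongConvexOn_iff_convex]
  have hlin := ((innerSL ℝ (g - m • a)).toLinearMap.convexOn hh.1).add_const
    (c - ⟪g, a⟫ + m / 2 * ‖a‖ ^ 2)
  refine (hh.add hlin).congr fun y _ ↦ ?_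
  simp only [Pi.add_apply, ContinuousLinearMap.coe_coe, innerSL_apply_apply, inner_sub_left,
    inner_sub_right, real_inner_smul_left, norm_sub_sq_real, real_inner_comm a y]
  ring

lemma StrongConvexOn.const_mul {s : Set E} {m c : ℝ} {f : E → ℝ} (hf : StrongConvexOn s m f)
    (hc : 0 ≤ c) : StrongConvexOn s (c * m) fun y ↦ c * f y := by
  refine ⟨hf.1, fun x hx y hy a b ha hb hab ↦ ?_⟩
  have := mul_le_mul_of_nonneg_left (hf.2 hx hy ha hb hab) hc
  simp only [smul_eq_mul] at this ⊢
  linarith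

lemma StrongConvexOn.add {s : Set E} {m l : ℝ} {f g : E → ℝ} (hf : StrongConvexOn s m f)
    (hg : StrongConvexOn s l g) : StrongConvexOn s (m + l) fun y ↦ f y + g y := by
  refine ⟨hf.1, fun x hx y hy a b ha hb hab ↦ ?_⟩
  have := add_le_add (hf.2 hx hy ha hb hab) (hg.2 hx hy ha hb hab)
  simp only [smul_eq_mul] at this ⊢
  linarith

/-- Quadratic growth of a strongly convex function away from its minimizer. -/
lemma StrongConvexOn.quadratic_growth {s : Set E} {m : ℝ} {f : E → ℝ}
    (hf : StrongConvexOn s m f) {z y : E} (hz : z ∈ s) (hmin : ∀ w ∈ s, f z ≤ f w) (hy : y ∈ s) :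
    f z + m / 2 * ‖y - z‖ ^ 2 ≤ f y := by
  have hsmall : ∀ t ∈ Set.Ioo (0 : ℝ) 1, f z + (1 - t) * (m / 2 * ‖y - z‖ ^ 2) ≤ f y := by
    intro t ht
    have h1t : 0 ≤ 1 - t := by linarith [ht.2]
    have hle := (hmin _ (hf.1 hy hz ht.1.le h1t (by ring))).trans
      (hf.2 hy hz ht.1.le h1t (by ring))
    simp only [smul_eq_mul] at hle
    have hmul : t * (f z + (1 - t) * (m / 2 * ‖y - z‖ ^ 2)) ≤ t * f y := by linarith
    exact le_of_mul_le_mul_left hmul ht.1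
  have hcont : Continuous fun t : ℝ ↦ f z + (1 - t) * (m / 2 * ‖y - z‖ ^ 2) := by fun_prop
  have hlim := (hcont.tendsto 0).mono_left (nhdsWithin_le_nhds (s := Set.Ioi 0))
  have hle := le_of_tendsto hlim
    (Filter.eventually_of_mem (Ioo_mem_nhdsGT one_pos) hsmall)
  simpa using hle

/-- The descent lemma for a function with Lipschitz gradient on a convex set. -/
lemma descent_of_lipschitz_gradient [CompleteSpace E] {Q : Set E} (hQ : Convex ℝ Q)
    {f : E → ℝ} {f' : E → E} {K : ℝ} (hgrad : ∀ v ∈ Q, HasGradientAt f (f' v) v)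
    (hsmooth : ∀ v ∈ Q, ∀ w ∈ Q, ‖f' v - f' w‖ ≤ K * ‖v - w‖)
    {v w : E} (hv : v ∈ Q) (hw : w ∈ Q) :
    f w ≤ f v + ⟪f' v, w - v⟫ + K / 2 * ‖w - v‖ ^ 2 := by
  have hmem : ∀ t ∈ Set.Icc (0 : ℝ) 1, v + t • (w - v) ∈ Q := fun t ht ↦
    hQ.add_smul_sub_mem hv hw ht
  have hderiv : ∀ t ∈ Set.Icc (0 : ℝ) 1,
      HasDerivAt (fun s : ℝ ↦ f (v + s • (w - v))) ⟪f' (v + t • (w - v)), w - v⟫ t := by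
    intro t ht
    have hline : HasDerivAt (fun s : ℝ ↦ v + s • (w - v)) (w - v) t := by
      simpa using ((hasDerivAt_id t).smul_const (w - v)).const_add v
    simpa [Function.comp_def] using! (hgrad _ (hmem t ht)).hasFDerivAt.comp_hasDerivAt t hline
  have hbound : ∀ t : ℝ, HasDerivAt
      (fun s : ℝ ↦ f v + s * ⟪f' v, w - v⟫ + s ^ 2 * (K / 2 * ‖w - v‖ ^ 2))
      (⟪f' v, w - v⟫ + t * (K * ‖w - v‖ ^ 2)) t := by
    intro t
    refine ((((hasDerivAt_id t).mul_const ⟪f' v, w - v⟫).const_add (f v)).add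
      ((hasDerivAt_pow 2 t).mul_const (K / 2 * ‖w - v‖ ^ 2))).congr_deriv ?_
    simp only [Nat.cast_ofNat]
    ring
  have hle := image_le_of_deriv_right_le_deriv_boundary (a := 0) (b := 1)
    (fun t ht ↦ (hderiv t ht).continuousAt.continuousWithinAt)
    (fun t ht ↦ (hderiv t (Set.Ico_subset_Icc_self ht)).hasDerivWithinAt)
    (by simp) (fun t _ ↦ (hbound t).continuousAt.continuousWithinAt)
    (fun t _ ↦ (hbound t).hasDerivWithinAt) (fun t ht ↦ by
      have hlip := hsmooth _ (hmem t (Set.Ico_subset_Icc_self ht)) v hv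
      rw [add_sub_cancel_left, norm_smul, Real.norm_of_nonneg ht.1] at hlip
      have hcs := (real_inner_le_norm (f' (v + t • (w - v)) - f' v) (w - v)).trans
        (mul_le_mul_of_nonneg_right hlip (norm_nonneg _))
      rw [inner_sub_left] at hcs
      linarith) (Set.right_mem_Icc.mpr zero_le_one)
  simpa using hle

/-- The descent lemma with a `δ`-inexact gradient. -/
lemma descent_of_inexact_gradient [CompleteSpace E] {Q : Set E} (hQ : Convex ℝ Q)
    {f : E → ℝ} {f' : E → E} {K δ : ℝ} (hK : 0 < K)
    (hgrad : ∀ v ∈ Q, HasGradientAt f (f' v) v)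
    (hsmooth : ∀ v ∈ Q, ∀ w ∈ Q, ‖f' v - f' w‖ ≤ K * ‖v - w‖)
    {v w g : E} (hv : v ∈ Q) (hw : w ∈ Q) (hg : ‖g - f' v‖ ≤ δ) :
    f w ≤ f v + ⟪g, w - v⟫ + K * ‖w - v‖ ^ 2 + δ ^ 2 / (2 * K) := by
  have hdesc := descent_of_lipschitz_gradient hQ hgrad hsmooth hv hw
  have hcs := (real_inner_le_norm (f' v - g) (w - v)).trans
    (mul_le_mul_of_nonneg_right (norm_sub_rev g (f' v) ▸ hg) (norm_nonneg _))
  rw [inner_sub_left] at hcs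
  have hyoung : δ * ‖w - v‖ ≤ K / 2 * ‖w - v‖ ^ 2 + δ ^ 2 / (2 * K) := by
    have hsq : 0 ≤ (K * ‖w - v‖ - δ) ^ 2 / (2 * K) := by positivity
    have heq : (K * ‖w - v‖ - δ) ^ 2 / (2 * K) =
        K / 2 * ‖w - v‖ ^ 2 + δ ^ 2 / (2 * K) - δ * ‖w - v‖ := by
      field_simp
      ring
    linarith
  linarith

end

/-- Proposition 6.5: per-iterate estimate of the modified STM in the composite
setting `f = 𝓛 + r`, with `L = 2 L_f`, `μ_τ = μ`, `δ₁ = δ`, `δ₂ = δ²/(2 L_f)`. -/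
theorem stmt_18 {n : ℕ} (Q : Set (EuclideanSpace ℝ (Fin n)))
    (hQclosed : IsClosed Q) (hQconvex : Convex ℝ Q)
    (Lc r : EuclideanSpace ℝ (Fin n) → ℝ)
    (hr : ConvexOn ℝ Set.univ r)
    (Lc' gt : EuclideanSpace ℝ (Fin n) → EuclideanSpace ℝ (Fin n))
    (Lf μ δ : ℝ) (hLf : 0 < Lf) (hμ : 0 ≤ μ) (hδ : 0 ≤ δ)
    (hgrad : ∀ v ∈ Q, HasGradientAt Lc (Lc' v) v)
    (hsmooth : ∀ v ∈ Q, ∀ w ∈ Q, ‖Lc' v - Lc' w‖ ≤ Lf * ‖v - w‖)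
    (hsc : ∀ v ∈ Q, ∀ w ∈ Q,
      Lc v + ⟪Lc' v, w - v⟫ + μ / 2 * ‖v - w‖ ^ 2 ≤ Lc w)
    (horacle : ∀ v ∈ Q, ‖gt v - Lc' v‖ ≤ δ)
    (f : EuclideanSpace ℝ (Fin n) → ℝ) (hf : ∀ v, f v = Lc v + r v)
    (α A : ℕ → ℝ) (xt x z : ℕ → EuclideanSpace ℝ (Fin n))
    (ψ : ℕ → EuclideanSpace ℝ (Fin n) → ℝ)
    (hxt0 : xt 0 ∈ Q) (hα0 : α 0 = 1 / (2 * Lf)) (hA0 : A 0 = 1 / (2 * Lf))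
    (hψ0 : ∀ y, ψ 0 y = 1 / 2 * ‖y - xt 0‖ ^ 2 +
      α 0 * (Lc (xt 0) + ⟪gt (xt 0), y - xt 0⟫ + μ / 2 * ‖y - xt 0‖ ^ 2 + r y))
    (hzmem : ∀ k, z k ∈ Q) (hzmin : ∀ k, ∀ y ∈ Q, ψ k (z k) ≤ ψ k y)
    (hx0 : x 0 = z 0)
    (hαpos : ∀ k, 0 < α (k + 1))
    (hαeq : ∀ k, (1 + μ * A k) * (A k + α (k + 1)) = 2 * Lf * α (k + 1) ^ 2)
    (hA : ∀ k, A (k + 1) = A k + α (k + 1))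
    (hxt : ∀ k, xt (k + 1) = (A (k + 1))⁻¹ • (A k • x k + α (k + 1) • z k))
    (hψ : ∀ k y, ψ (k + 1) y = ψ k y + α (k + 1) *
      (Lc (xt (k + 1)) + ⟪gt (xt (k + 1)), y - xt (k + 1)⟫ +
        μ / 2 * ‖y - xt (k + 1)‖ ^ 2 + r y))
    (hx : ∀ k, x (k + 1) = (A (k + 1))⁻¹ • (A k • x k + α (k + 1) • z (k + 1))) :
    ∀ k : ℕ, A k * f (x k) ≤ ψ k (z k) +
      δ ^ 2 / (2 * Lf) * ∑ j ∈ Finset.range (k + 1), A j +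
      δ * ∑ j ∈ Finset.range k, α (j + 1) * ‖xt (j + 1) - z j‖ := by
  have hApos : ∀ k, 0 < A k := by
    intro k
    induction k with
    | zero => rw [hA0]; positivity
    | succ k ih => rw [hA]; linarith [hαpos k]
  have hcomb : ∀ k, ∀ u ∈ Q, ∀ w ∈ Q, (A (k + 1))⁻¹ • (A k • u + α (k + 1) • w) ∈ Q := by
    intro k u hu w hw
    have hpos := hApos (k + 1)
    rw [smul_add, smul_smul, smul_smul]
    refine hQconvex hu hw (mul_nonneg (inv_nonneg.mpr hpos.le) (hApos k).le)
      (mul_nonneg (inv_nonneg.mpr hpos.le) (hαpos k).le) ?_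
    rw [← mul_add, ← hA, inv_mul_cancel₀ hpos.ne']
  have hxQ : ∀ k, x k ∈ Q := by
    intro k
    induction k with
    | zero => rw [hx0]; exact hzmem 0
    | succ k ih => rw [hx]; exact hcomb k _ ih _ (hzmem _)
  have hxtQ : ∀ k, xt (k + 1) ∈ Q := fun k ↦ by
    rw [hxt]
    exact hcomb k _ (hxQ k) _ (hzmem k)
  have hrQ : ConvexOn ℝ Q r := hr.subset (Set.subset_univ Q) hQconvex
  have hψconv : ∀ k, StrongConvexOn Q (1 + μ * A k) (ψ k) := by
    intro k
    induction k with
    | zero =>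
      have hprox := (convexOn_const (0 : ℝ) hQconvex).strongConvexOn_model 1 0 0 (xt 0)
      have hmodel := (hrQ.strongConvexOn_model μ (Lc (xt 0)) (gt (xt 0)) (xt 0)).const_mul
        (c := α 0) (by rw [hα0]; positivity)
      have hψeq : ψ 0 = _ := funext hψ0
      rw [hψeq, show 1 + μ * A 0 = 1 + α 0 * μ by rw [hA0, hα0, mul_comm]]
      simpa using hprox.add hmodel
    | succ k ih =>
      have hmodel := (hrQ.strongConvexOn_model μ (Lc (xt (k + 1))) (gt (xt (k + 1)))
        (xt (k + 1))).const_mul (hαpos k).le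
      have hψeq : ψ (k + 1) = _ := funext (hψ k)
      rw [hψeq, show 1 + μ * A (k + 1) = 1 + μ * A k + α (k + 1) * μ by rw [hA]; ring]
      exact ih.add hmodel
  intro k
  induction k with
  | zero =>
    have hdesc := mul_le_mul_of_nonneg_left (descent_of_inexact_gradient hQconvex hLf hgrad hsmooth
      hxt0 (hzmem 0) (horacle _ hxt0)) (hApos 0).le
    have hprox : A 0 * (Lf * ‖z 0 - xt 0‖ ^ 2) = 1 / 2 * ‖z 0 - xt 0‖ ^ 2 := by
      rw [hA0]
      field_simp
    have hquad : 0 ≤ A 0 * (μ / 2 * ‖z 0 - xt 0‖ ^ 2) := by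
      have := hApos 0
      positivity
    rw [hf, hx0, hψ0, hα0, ← hA0]
    simp only [zero_add, Finset.sum_range_one, Finset.sum_range_zero, mul_zero, add_zero]
    linarith
  | succ k ih =>
    have hpos := hApos (k + 1)
    have hgrowth := (hψconv k).quadratic_growth (hzmem k) (hzmin k) (hzmem (k + 1))
    have hdesc := mul_le_mul_of_nonneg_left (descent_of_inexact_gradient hQconvex hLf hgrad hsmooth
      (hxtQ k) (hxQ (k + 1)) (horacle _ (hxtQ k))) hpos.le
    have hlower := mul_le_mul_of_nonneg_left (hsc _ (hxtQ k) _ (hxQ k)) (hApos k).le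
    have hquadx : 0 ≤ A k * (μ / 2 * ‖xt (k + 1) - x k‖ ^ 2) := by
      have := hApos k
      positivity
    have hquadz : 0 ≤ α (k + 1) * (μ / 2 * ‖z (k + 1) - xt (k + 1)‖ ^ 2) := by
      have := hαpos k
      positivity
    have hAxt : A (k + 1) • xt (k + 1) = A k • x k + α (k + 1) • z k := by
      rw [hxt, smul_inv_smul₀ hpos.ne']
    have hAx : A (k + 1) • x (k + 1) = A k • x k + α (k + 1) • z (k + 1) := by
      rw [hx, smul_inv_smul₀ hpos.ne']
    have hstep : A (k + 1) • (x (k + 1) - xt (k + 1)) = α (k + 1) • (z (k + 1) - z k) := by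
      rw [smul_sub, hAx, hAxt, smul_sub]
      abel
    have hsplit : A (k + 1) • (x (k + 1) - xt (k + 1)) =
        A k • (x k - xt (k + 1)) + α (k + 1) • (z (k + 1) - xt (k + 1)) := by
      rw [smul_sub, hAx, hA, add_smul, smul_sub, smul_sub]
      abel
    have hback : A k • (x k - xt (k + 1)) = α (k + 1) • (xt (k + 1) - z k) := by
      have := hAxt
      rw [hA, add_smul] at this
      rw [smul_sub, smul_sub, sub_eq_sub_iff_add_eq_add, ← this, add_comm]
    have hnorm : (1 + μ * A k) / 2 * ‖z (k + 1) - z k‖ ^ 2 =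
        A (k + 1) * (Lf * ‖x (k + 1) - xt (k + 1)‖ ^ 2) := by
      have hn := congrArg (fun v ↦ ‖v‖ ^ 2) hstep
      simp only [norm_smul, mul_pow, Real.norm_eq_abs, sq_abs] at hn
      have hα := hαeq k
      rw [← hA] at hα
      refine mul_left_cancel₀ (pow_pos (hαpos k) 2).ne' ?_
      linear_combination (-(1 + μ * A k) / 2) * hn +
        (A (k + 1) * ‖x (k + 1) - xt (k + 1)‖ ^ 2 / 2) * hα
    have hinner := congrArg (fun v ↦ ⟪gt (xt (k + 1)), v⟫) hsplit
    simp only [inner_add_right, real_inner_smul_right] at hinner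
    have herr : A k * ⟪gt (xt (k + 1)) - Lc' (xt (k + 1)), x k - xt (k + 1)⟫ ≤
        δ * (α (k + 1) * ‖xt (k + 1) - z k‖) := by
      rw [← real_inner_smul_right, hback, real_inner_smul_right, mul_left_comm]
      exact mul_le_mul_of_nonneg_left ((real_inner_le_norm _ _).trans
        (mul_le_mul_of_nonneg_right (horacle _ (hxtQ k)) (norm_nonneg _))) (hαpos k).le
    rw [inner_sub_left] at herr
    have hrconv : A (k + 1) * r (x (k + 1)) ≤ A k * r (x k) + α (k + 1) * r (z (k + 1)) := by
      have hle := hr.2 (Set.mem_univ (x k)) (Set.mem_univ (z (k + 1)))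
        (mul_nonneg (inv_nonneg.mpr hpos.le) (hApos k).le)
        (mul_nonneg (inv_nonneg.mpr hpos.le) (hαpos k).le)
        (by rw [← mul_add, ← hA, inv_mul_cancel₀ hpos.ne'])
      rw [← smul_smul, ← smul_smul, ← smul_add, ← hx] at hle
      simp only [smul_eq_mul, mul_assoc, ← mul_add] at hle
      rwa [inv_mul_eq_div, le_div_iff₀' hpos] at hle
    have hLc : A (k + 1) * Lc (xt (k + 1)) =
        A k * Lc (xt (k + 1)) + α (k + 1) * Lc (xt (k + 1)) := by rw [hA, add_mul]
    rw [hf] at ih ⊢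
    rw [hψ, Finset.sum_range_succ _ (k + 1),
      Finset.sum_range_succ (fun j ↦ α (j + 1) * ‖xt (j + 1) - z j‖) k]
    linarith
end
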